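/- arXiv:1009.0382 — 3 statements merged into one kernel-verified Lean document; each statement's English description precedes it below -/
import Mathlib

section
/- Let m_1,…,m_n ∈ ℕ^d, let s_1,…,s_n ∈ ℕ, set m = s_1m_1 + ⋯ + s_nm_n, and let ℓ be a positive integer such that gcd(ℓ, m_j) = 1 for some component m_j of m. If the affine toric variety V_S is a set-theoretic complete intersection on polynomials f_1,…,f_r ∈ K[x_1,…,x_n], i.e. the radical of I_S equals the radical of ⟨f_1,…,f_r⟩, then its extension is a set-theoretic complete intersection on r+1 polynomials: the radical of I_{S_{ℓ,m}} equals the radical of the ideal of K[x_1,…,x_{n+1}] generated by ι(f_1),…,ι(f_r) and F = x_{n+1}^ℓ − x_1^{s_1}⋯x_n^{s_n}. -/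
open MvPolynomial

theorem aux_indep {K : Type*} [Field K] {d : ℕ} (ℓ : ℕ) (hℓ : 0 < ℓ) (μ : Fin d →₀ ℕ) (j : Fin d)
    (hj : Nat.gcd ℓ (μ j) = 1) (g : ℕ → MvPolynomial (Fin d) K)
    (h : ∑ k ∈ Finset.range ℓ, expand ℓ (g k) * (monomial μ (1 : K)) ^ k = 0) :
    ∀ k ∈ Finset.range ℓ, g k = 0 := by
  intro k hk
  ext u
  have h2 := congrArg (coeff (ℓ • u + k • μ)) h
  rw [coeff_sum, Finset.sum_eq_single k] at h2
  · rw [monomial_pow, one_pow, coeff_mul_monomial, coeff_expand_smul ℓ hℓ.ne', mul_one] at h2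
    simpa using h2
  · intro b hb hbk
    rw [monomial_pow, one_pow, coeff_mul_monomial']
    split_ifs with hle
    · rw [coeff_expand_of_not_dvd (i := j), zero_mul]
      intro hdvd
      apply hbk
      have hle' := hle j
      simp only [Finsupp.coe_smul, Finsupp.coe_add, Finsupp.coe_tsub, Pi.smul_apply, Pi.add_apply,
        Pi.sub_apply, smul_eq_mul] at hdvd hle'
      have h3 : b * μ j ≡ ℓ * u j + k * μ j [MOD ℓ] := (Nat.modEq_iff_dvd' hle').2 hdvd
      have h4 : b * μ j ≡ k * μ j [MOD ℓ] := by
        refine h3.trans ?_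
        simp [Nat.ModEq]
      have h5 := Nat.ModEq.cancel_right_of_coprime hj h4
      exact Nat.ModEq.eq_of_lt_of_lt h5 (Finset.mem_range.1 hb) (Finset.mem_range.1 hk)
    · rfl
  · intro h; exact absurd hk h

theorem aux_reduce {K : Type*} [Field K] {n : ℕ} (ℓ : ℕ) (hℓ : 0 < ℓ) (M : MvPolynomial (Fin n) K)
    (p : MvPolynomial (Fin (n+1)) K) :
    ∃ (q : ℕ → MvPolynomial (Fin n) K) (c : MvPolynomial (Fin (n+1)) K),
      p = ∑ k ∈ Finset.range ℓ, rename Fin.castSucc (q k) * X (Fin.last n) ^ k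
        + (X (Fin.last n) ^ ℓ - rename Fin.castSucc M) * c := by
  have hadd : ∀ a b : MvPolynomial (Fin (n+1)) K,
    (∃ (q : ℕ → MvPolynomial (Fin n) K) (c : MvPolynomial (Fin (n+1)) K),
      a = ∑ k ∈ Finset.range ℓ, rename Fin.castSucc (q k) * X (Fin.last n) ^ k
        + (X (Fin.last n) ^ ℓ - rename Fin.castSucc M) * c) →
    (∃ (q : ℕ → MvPolynomial (Fin n) K) (c : MvPolynomial (Fin (n+1)) K),
      b = ∑ k ∈ Finset.range ℓ, rename Fin.castSucc (q k) * X (Fin.last n) ^ k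
        + (X (Fin.last n) ^ ℓ - rename Fin.castSucc M) * c) →
    (∃ (q : ℕ → MvPolynomial (Fin n) K) (c : MvPolynomial (Fin (n+1)) K),
      a + b = ∑ k ∈ Finset.range ℓ, rename Fin.castSucc (q k) * X (Fin.last n) ^ k
        + (X (Fin.last n) ^ ℓ - rename Fin.castSucc M) * c) := by
    rintro a b ⟨q, c, rfl⟩ ⟨q', c', rfl⟩
    refine ⟨fun k => q k + q' k, c + c', ?_⟩
    simp only [map_add, add_mul, Finset.sum_add_distrib]
    ring
  have hpow : ∀ (g : MvPolynomial (Fin n) K) (e : ℕ),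
    (∃ (q : ℕ → MvPolynomial (Fin n) K) (c : MvPolynomial (Fin (n+1)) K),
      rename Fin.castSucc g * X (Fin.last n) ^ e
       = ∑ k ∈ Finset.range ℓ, rename Fin.castSucc (q k) * X (Fin.last n) ^ k
        + (X (Fin.last n) ^ ℓ - rename Fin.castSucc M) * c) := by
    intro g e
    obtain ⟨c, hc⟩ := sub_dvd_pow_sub_pow (X (Fin.last n) ^ ℓ : MvPolynomial (Fin (n+1)) K)
      (rename Fin.castSucc M) (e / ℓ)
    refine ⟨fun k => if k = e % ℓ then g * M ^ (e / ℓ) else 0,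
      rename Fin.castSucc g * X (Fin.last n) ^ (e % ℓ) * c, ?_⟩
    rw [Finset.sum_eq_single (e % ℓ)]
    · have he : (X (Fin.last n) : MvPolynomial (Fin (n+1)) K) ^ e
          = (X (Fin.last n) ^ ℓ) ^ (e / ℓ) * X (Fin.last n) ^ (e % ℓ) := by
        rw [← pow_mul, ← pow_add, Nat.div_add_mod]
      simp only [if_true, map_mul, map_pow]
      rw [he]
      linear_combination (rename Fin.castSucc g * X (Fin.last n) ^ (e % ℓ)) * hc
    · intro b _ hb
      simp [hb]
    · intro h
      exact absurd (Finset.mem_range.2 (Nat.mod_lt _ hℓ)) h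
  induction p using MvPolynomial.induction_on with
  | C a => simpa using hpow (C a) 0
  | add a b ha hb => exact hadd a b ha hb
  | mul_X p i hp =>
    obtain ⟨q, c, hp⟩ := hp
    rw [hp, add_mul, Finset.sum_mul]
    apply hadd
    · refine Finset.sum_induction _ (fun a => ∃ (q : ℕ → MvPolynomial (Fin n) K)
        (c : MvPolynomial (Fin (n+1)) K),
        a = ∑ k ∈ Finset.range ℓ, rename Fin.castSucc (q k) * X (Fin.last n) ^ k
        + (X (Fin.last n) ^ ℓ - rename Fin.castSucc M) * c) hadd ⟨0, 0, by simp⟩ ?_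
      intro k _
      refine Fin.lastCases ?_ (fun i => ?_) i
      · rw [mul_assoc, ← pow_succ]
        exact hpow _ _
      · have := hpow (q k * X i) k
        rw [map_mul, rename_X] at this
        rw [mul_right_comm]
        exact this
    · exact ⟨0, c * X i, by simp [mul_assoc]⟩

/-- If the affine toric variety `V_S` is a set-theoretic complete
intersection on `f_1, …, f_r`, i.e. `√(I_S) = √⟨f_1,…,f_r⟩`, then its extension
is a set-theoretic complete intersection on `ι(f_1), …, ι(f_r), F`, where
`F = x_{n+1}^ℓ − x_1^{s_1}⋯x_n^{s_n}`. -/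
theorem stmt_4 (K : Type*) [Field K] (d n r : ℕ)
    (m : Fin n → Fin d → ℕ) (s : Fin n → ℕ) (ℓ : ℕ) (hℓ : 0 < ℓ)
    (hgcd : ∃ j : Fin d, Nat.gcd ℓ (∑ i, s i * m i j) = 1)
    (φ : MvPolynomial (Fin n) K →ₐ[K] MvPolynomial (Fin d) K)
    (hφ : φ = aeval fun i : Fin n => ∏ j : Fin d, X j ^ m i j)
    (ψ : MvPolynomial (Fin (n + 1)) K →ₐ[K] MvPolynomial (Fin d) K)
    (hψ : ψ = aeval fun i : Fin (n + 1) =>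
      Fin.lastCases (∏ j : Fin d, X j ^ (∑ i', s i' * m i' j))
        (fun i' : Fin n => ∏ j : Fin d, X j ^ (ℓ * m i' j)) i)
    (F : MvPolynomial (Fin (n + 1)) K)
    (hF : F = X (Fin.last n) ^ ℓ - ∏ i : Fin n, X i.castSucc ^ s i)
    (f : Fin r → MvPolynomial (Fin n) K)
    (hsci : (RingHom.ker φ).radical = (Ideal.span (Set.range f)).radical) :
    (RingHom.ker ψ).radical =
      (Ideal.span (insert F
        (Set.range fun i : Fin r =>
          rename (Fin.castSucc : Fin n → Fin (n + 1)) (f i)))).radical := by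
  have hcomp : ∀ g : MvPolynomial (Fin n) K, ψ (rename Fin.castSucc g) = expand ℓ (φ g) := by
    intro g
    have : ψ.comp (rename Fin.castSucc) = (expand ℓ).comp φ := by
      subst hφ hψ
      ext1 i
      simp [pow_mul]
    exact DFunLike.congr_fun this g
  have hF' : F = X (Fin.last n) ^ ℓ - rename Fin.castSucc (∏ i : Fin n, X i ^ s i) := by
    simp [hF]
  have hlast : ψ (X (Fin.last n)) = ∏ j : Fin d, X j ^ (∑ i', s i' * m i' j) := by
    simp [hψ]
  have hψF : ψ F = 0 := by
    rw [hF', map_sub, hcomp, map_pow, hlast, hφ, sub_eq_zero]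
    simp only [map_prod, map_pow, aeval_X, expand_X, ← Finset.prod_pow]
    rw [Finset.prod_comm]
    refine Finset.prod_congr rfl fun j _ => ?_
    simp only [← pow_mul]
    rw [Finset.prod_pow_eq_pow_sum, Finset.sum_mul]
    congr 1
    exact Finset.sum_congr rfl fun i _ => by ring
  apply le_antisymm
  · rw [Ideal.radical_le_radical_iff]
    intro p hp
    rw [RingHom.mem_ker] at hp
    obtain ⟨q, c, hpq⟩ := aux_reduce ℓ hℓ (∏ i : Fin n, X i ^ s i) p
    rw [← hF'] at hpq
    obtain ⟨j, hj⟩ := hgcd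
    have hT : ψ (X (Fin.last n))
        = monomial (Finsupp.equivFunOnFinite.symm fun j => ∑ i', s i' * m i' j) (1 : K) := by
      rw [hlast, monomial_eq, Finsupp.prod_fintype _ _ (by simp)]
      simp
    have hq := aux_indep ℓ hℓ (Finsupp.equivFunOnFinite.symm fun j => ∑ i', s i' * m i' j) j
      (by simpa using hj) (fun k => φ (q k)) (by
        rw [hpq, map_add, map_mul, hψF, zero_mul, add_zero, map_sum] at hp
        simpa only [map_mul, map_pow, hT, hcomp] using hp)
    rw [hpq]
    refine add_mem (sum_mem fun k hk => ?_) ?_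
    · apply Ideal.mul_mem_right
      have h1 : q k ∈ (Ideal.span (Set.range f)).radical := by
        rw [← hsci]
        exact Ideal.le_radical (hq k hk)
      obtain ⟨N, hN⟩ := h1
      refine ⟨N, ?_⟩
      rw [← map_pow]
      have h2 := Ideal.mem_map_of_mem (rename (Fin.castSucc : Fin n → Fin (n + 1))) hN
      rw [Ideal.map_span, ← Set.range_comp] at h2
      exact Ideal.span_mono (Set.subset_insert _ _) h2
    · exact Ideal.mul_mem_right _ _ (Ideal.le_radical (Ideal.subset_span (Set.mem_insert _ _)))
  · apply Ideal.radical_mono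
    rw [Ideal.span_le]
    rintro _ (rfl | ⟨i, rfl⟩)
    · exact hψF
    · have h1 : f i ∈ (RingHom.ker φ).radical := by
        rw [hsci]
        exact Ideal.le_radical (Ideal.subset_span ⟨i, rfl⟩)
      rw [(RingHom.ker_isPrime φ).radical, RingHom.mem_ker] at h1
      change ψ _ = 0
      rw [hcomp, h1, map_zero]
end

section
/- Let m_1,…,m_n ∈ ℕ^d, let s_1,…,s_n ∈ ℕ, set m = s_1m_1 + ⋯ + s_nm_n, and let ℓ be a positive integer with ℓ ≤ s_1 + ⋯ + s_n such that gcd(ℓ, m_j) = 1 for some component m_j of m. If the Hilbert function of the local ring of V_S is non-decreasing, i.e. k ↦ H_{I_S*}(k) is non-decreasing, then the Hilbert function of the local ring of the extension is non-decreasing, i.e. k ↦ H_{(I_{S_{ℓ,m}})*}(k) is non-decreasing. -/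
open MvPolynomial

/-- `f*`: the nonzero homogeneous component of `f` of smallest total degree. -/
noncomputable def lowestForm {K : Type*} [CommSemiring K] {σ : Type*}
    (f : MvPolynomial σ K) : MvPolynomial σ K :=
  homogeneousComponent (sInf {i : ℕ | homogeneousComponent i f ≠ 0}) f

/-- `I*`: the ideal of the tangent cone at the origin, generated by the
lowest-degree forms `f*` of the nonzero elements `f ∈ I`. -/
noncomputable def tangentConeIdeal {K : Type*} [CommSemiring K] {σ : Type*}
    (I : Ideal (MvPolynomial σ K)) : Ideal (MvPolynomial σ K) :=
  Ideal.span {g | ∃ f ∈ I, f ≠ 0 ∧ g = lowestForm f}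

/-- The Hilbert function of `P/J` for an ideal `J` of a polynomial ring `P`:
`H_J(k) = dim_K P_k − dim_K (J ∩ P_k)`. -/
noncomputable def hilbertFn {K : Type*} [Field K] {σ : Type*}
    (J : Ideal (MvPolynomial σ K)) (k : ℕ) : ℕ :=
  Module.finrank K (homogeneousSubmodule σ K k) -
    Module.finrank K
      (Submodule.restrictScalars K J ⊓ homogeneousSubmodule σ K k :
        Submodule K (MvPolynomial σ K))

section PartOne

variable {K : Type*} [Field K] {σ : Type*}

/-- Polynomials of order at least `k`. -/
noncomputable def ordGe (K : Type*) [Field K] (σ : Type*) (k : ℕ) :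
    Submodule K (MvPolynomial σ K) where
  carrier := {f | ∀ u : σ →₀ ℕ, u.degree < k → coeff u f = 0}
  add_mem' := by
    intro a b ha hb u hu
    rw [coeff_add, ha u hu, hb u hu, add_zero]
  zero_mem' := by intro u _; simp
  smul_mem' := by
    intro c a ha u hu
    rw [coeff_smul, ha u hu, smul_zero]

theorem mem_ordGe {k : ℕ} {f : MvPolynomial σ K} :
    f ∈ ordGe K σ k ↔ ∀ u : σ →₀ ℕ, u.degree < k → coeff u f = 0 := Iff.rfl

theorem ordGe_anti {k l : ℕ} (h : k ≤ l) : ordGe K σ l ≤ ordGe K σ k :=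
  fun _ hf u hu => hf u (hu.trans_le h)

theorem ordGe_zero : ordGe K σ 0 = ⊤ := by
  ext f; simp [mem_ordGe]

theorem homogeneousComponent_monomial_mul (v : σ →₀ ℕ) (c : K) (p : MvPolynomial σ K) (j : ℕ) :
    homogeneousComponent (v.degree + j) (monomial v c * p) =
      monomial v c * homogeneousComponent j p := by
  classical
  ext u
  rw [coeff_homogeneousComponent, coeff_monomial_mul', coeff_monomial_mul',
    coeff_homogeneousComponent]
  by_cases h : v ≤ u
  · obtain ⟨w, rfl⟩ := exists_add_of_le h
    simp [map_add]
  · simp [h]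

theorem monomial_mul_mem_ordGe (v : σ →₀ ℕ) (c : K) {p : MvPolynomial σ K} {j : ℕ}
    (hp : p ∈ ordGe K σ j) : monomial v c * p ∈ ordGe K σ (v.degree + j) := by
  classical
  intro u hu
  rw [coeff_monomial_mul']
  split_ifs with h
  · obtain ⟨w, rfl⟩ := exists_add_of_le h
    rw [map_add] at hu
    rw [add_tsub_cancel_left, hp w (by omega), mul_zero]
  · rfl

theorem homogeneousComponent_eq_zero_of_mem_ordGe {k j : ℕ} {f : MvPolynomial σ K}
    (hf : f ∈ ordGe K σ k) (h : j < k) : homogeneousComponent j f = 0 := by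
  ext u
  rw [coeff_homogeneousComponent, coeff_zero]
  split_ifs with hu
  · exact hf u (by omega)
  · rfl

theorem lowest_mem_ordGe (f : MvPolynomial σ K) :
    f ∈ ordGe K σ (sInf {i : ℕ | homogeneousComponent i f ≠ 0}) := by
  intro u hu
  have h := Nat.notMem_of_lt_sInf hu
  simp only [Set.mem_ofPred_eq, not_not] at h
  have := congrArg (coeff u) h
  simpa [coeff_homogeneousComponent] using this

theorem tangentCone_comp (J : Ideal (MvPolynomial σ K)) {p : MvPolynomial σ K}
    (hp : p ∈ tangentConeIdeal J) :
    ∀ k, ∃ f ∈ J, f ∈ ordGe K σ k ∧ homogeneousComponent k f = homogeneousComponent k p := by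
  unfold tangentConeIdeal at hp
  induction hp using Submodule.span_induction with
  | mem x hx =>
    obtain ⟨f, hf, -, rfl⟩ := hx
    intro k
    have hm := lowest_mem_ordGe f
    unfold lowestForm
    set e := sInf {i : ℕ | homogeneousComponent i f ≠ 0}
    by_cases h : k = e
    · subst h
      refine ⟨f, hf, hm, ?_⟩
      rw [homogeneousComponent_eq_self (homogeneousComponent_mem _ _)]
    · refine ⟨0, J.zero_mem, Submodule.zero_mem _, ?_⟩
      rw [homogeneousComponent_of_mem (homogeneousComponent_mem e f), if_neg h, map_zero]
  | zero => exact fun k => ⟨0, J.zero_mem, Submodule.zero_mem _, rfl⟩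
  | add x y _ _ hx hy =>
    intro k
    obtain ⟨f, hf, hf1, hf2⟩ := hx k
    obtain ⟨g, hg, hg1, hg2⟩ := hy k
    exact ⟨f + g, J.add_mem hf hg, Submodule.add_mem _ hf1 hg1, by rw [map_add, map_add, hf2, hg2]⟩
  | smul a x _ hx =>
    induction a using MvPolynomial.induction_on' with
    | monomial v c =>
      intro k
      rw [smul_eq_mul]
      by_cases h : v.degree ≤ k
      · obtain ⟨j, rfl⟩ := exists_add_of_le h
        obtain ⟨f, hf, hf1, hf2⟩ := hx j
        refine ⟨monomial v c * f, J.mul_mem_left _ hf, monomial_mul_mem_ordGe v c hf1, ?_⟩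
        rw [homogeneousComponent_monomial_mul, homogeneousComponent_monomial_mul, hf2]
      · refine ⟨0, J.zero_mem, Submodule.zero_mem _, ?_⟩
        have h0 : x ∈ ordGe K σ 0 := by rw [ordGe_zero]; trivial
        rw [homogeneousComponent_eq_zero_of_mem_ordGe (monomial_mul_mem_ordGe v c h0)
          (by omega), map_zero]
    | add a b ha hb =>
      intro k
      obtain ⟨f, hf, hf1, hf2⟩ := ha k
      obtain ⟨g, hg, hg1, hg2⟩ := hb k
      exact ⟨f + g, J.add_mem hf hg, Submodule.add_mem _ hf1 hg1, by
        rw [map_add, add_smul, map_add, hf2, hg2]⟩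

theorem comp_mem_tangentCone (J : Ideal (MvPolynomial σ K)) {f : MvPolynomial σ K} {k : ℕ}
    (hf : f ∈ J) (hk : f ∈ ordGe K σ k) : homogeneousComponent k f ∈ tangentConeIdeal J := by
  by_cases h : homogeneousComponent k f = 0
  · rw [h]; exact Ideal.zero_mem _
  · refine Ideal.subset_span ⟨f, hf, ?_, ?_⟩
    · rintro rfl; simp at h
    · unfold lowestForm
      congr 2
      refine le_antisymm ?_ (Nat.sInf_le h)
      by_contra hlt
      push Not at hlt
      have hmem := Nat.sInf_mem (s := {i : ℕ | homogeneousComponent i f ≠ 0}) ⟨k, h⟩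
      exact hmem (homogeneousComponent_eq_zero_of_mem_ordGe hk hlt)

/-- `J + M_k`. -/
noncomputable def jm (J : Ideal (MvPolynomial σ K)) (k : ℕ) : Submodule K (MvPolynomial σ K) :=
  Submodule.restrictScalars K J ⊔ ordGe K σ k

/-- The dimension of `P / (J + M_k)`. -/
noncomputable def colen (J : Ideal (MvPolynomial σ K)) (k : ℕ) : ℕ :=
  Module.finrank K (MvPolynomial σ K ⧸ jm J k)

theorem jm_anti (J : Ideal (MvPolynomial σ K)) {k l : ℕ} (h : k ≤ l) : jm J l ≤ jm J k :=
  sup_le_sup_left (ordGe_anti h) _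

theorem trunc_sub_mem (f : MvPolynomial σ K) (k : ℕ) :
    f - ∑ i ∈ Finset.range k, homogeneousComponent i f ∈ ordGe K σ k := by
  intro u hu
  rw [coeff_sub, coeff_sum]
  simp [coeff_homogeneousComponent, hu]

instance jm_finite [Finite σ] (J : Ideal (MvPolynomial σ K)) (k : ℕ) :
    Module.Finite K (MvPolynomial σ K ⧸ jm J k) := by
  refine Module.Finite.of_surjective
    ((jm J k).mkQ ∘ₗ (restrictTotalDegree σ K k).subtype) ?_
  intro x
  obtain ⟨f, rfl⟩ := (jm J k).mkQ_surjective x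
  refine ⟨⟨∑ i ∈ Finset.range k, homogeneousComponent i f, ?_⟩, ?_⟩
  · refine Submodule.sum_mem _ fun i hi => ?_
    rw [mem_restrictTotalDegree]
    exact (homogeneousComponent_isHomogeneous i f).totalDegree_le.trans
      (Finset.mem_range.1 hi).le
  · simp only [LinearMap.comp_apply, Submodule.subtype_apply, Submodule.mkQ_apply]
    symm
    rw [Submodule.Quotient.eq]
    exact Submodule.mem_sup_right (trunc_sub_mem f k)

instance homog_finite [Finite σ] (k : ℕ) : Module.Finite K (homogeneousSubmodule σ K k) := by
  have hle : homogeneousSubmodule σ K k ≤ restrictTotalDegree σ K k := by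
    intro f hf
    rw [mem_restrictTotalDegree]
    exact IsHomogeneous.totalDegree_le hf
  exact Submodule.finiteDimensional_of_le hle

theorem homog_mem_ordGe {k : ℕ} {p : MvPolynomial σ K} (hp : p ∈ homogeneousSubmodule σ K k) :
    p ∈ ordGe K σ k := by
  intro u hu
  rw [← homogeneousComponent_eq_self hp, coeff_homogeneousComponent, if_neg hu.ne]

theorem colen_succ [Finite σ] (J : Ideal (MvPolynomial σ K)) (k : ℕ) :
    colen J (k + 1) = colen J k + hilbertFn (tangentConeIdeal J) k := by
  let F : (MvPolynomial σ K ⧸ jm J (k + 1)) →ₗ[K] (MvPolynomial σ K ⧸ jm J k) :=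
    Submodule.factor (jm_anti J k.le_succ)
  have hF : Function.Surjective F := Submodule.factor_surjective _
  let G : homogeneousSubmodule σ K k →ₗ[K] (MvPolynomial σ K ⧸ jm J (k + 1)) :=
    (jm J (k + 1)).mkQ ∘ₗ (homogeneousSubmodule σ K k).subtype
  have h1 := F.finrank_range_add_finrank_ker
  have h2 := G.finrank_range_add_finrank_ker
  rw [LinearMap.range_eq_top.2 hF, finrank_top] at h1
  have h3 : LinearMap.range G = LinearMap.ker F := by
    ext x
    obtain ⟨f, rfl⟩ := (jm J (k + 1)).mkQ_surjective x
    rw [LinearMap.mem_range, LinearMap.mem_ker]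
    have : F ((jm J (k + 1)).mkQ f) = (jm J k).mkQ f := rfl
    rw [this, ← LinearMap.mem_ker, Submodule.ker_mkQ]
    constructor
    · rintro ⟨⟨p, hp⟩, hpf⟩
      have h := (Submodule.Quotient.eq _).1 hpf
      have h' := jm_anti J k.le_succ h
      have hp' : p ∈ jm J k := Submodule.mem_sup_right (homog_mem_ordGe hp)
      have := Submodule.sub_mem _ hp' h'
      simpa using this
    · intro hf
      obtain ⟨a, ha, b, hb, rfl⟩ := Submodule.mem_sup.1 hf
      refine ⟨⟨homogeneousComponent k b, homogeneousComponent_mem k b⟩, ?_⟩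
      refine (Submodule.Quotient.eq _).2 ?_
      have hb' : b - homogeneousComponent k b ∈ ordGe K σ (k + 1) := by
        intro u hu
        rw [coeff_sub, coeff_homogeneousComponent]
        split_ifs with h
        · simp
        · rw [hb u (by omega), sub_zero]
      have : (homogeneousComponent k b - (a + b)) = -(a + (b - homogeneousComponent k b)) := by
        ring
      simp only [Submodule.subtype_apply]
      rw [this]
      exact Submodule.neg_mem _ (Submodule.add_mem_sup ha hb')
  have h4 : LinearMap.ker G = Submodule.comap (homogeneousSubmodule σ K k).subtype
      (Submodule.restrictScalars K (tangentConeIdeal J) ⊓ homogeneousSubmodule σ K k) := by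
    ext ⟨p, hp⟩
    have e : G ⟨p, hp⟩ = (jm J (k + 1)).mkQ p := rfl
    rw [LinearMap.mem_ker, e, ← LinearMap.mem_ker, Submodule.ker_mkQ, Submodule.mem_comap]
    simp only [Submodule.subtype_apply, Submodule.mem_inf, Submodule.restrictScalars_mem, hp,
      and_true]
    constructor
    · intro h
      obtain ⟨a, ha, b, hb, rfl⟩ := Submodule.mem_sup.1 h
      have ha' : a ∈ ordGe K σ k := by
        have := Submodule.sub_mem _ (homog_mem_ordGe hp) (ordGe_anti k.le_succ hb)
        simpa using this
      have := comp_mem_tangentCone J ha ha'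
      rw [← homogeneousComponent_eq_self hp, map_add,
        homogeneousComponent_eq_zero_of_mem_ordGe hb k.lt_succ_self, add_zero]
      exact this
    · intro h
      obtain ⟨f, hf, hf1, hf2⟩ := tangentCone_comp J h k
      rw [homogeneousComponent_eq_self hp] at hf2
      have : p = f + (p - f) := by ring
      rw [this]
      refine Submodule.add_mem_sup hf ?_
      intro u hu
      rw [← hf2, coeff_sub, coeff_homogeneousComponent]
      split_ifs with h
      · simp
      · rw [hf1 u (by omega), sub_zero]
  have h5 := (Submodule.comapSubtypeEquivOfLe (p := Submodule.restrictScalars K (tangentConeIdeal J)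
    ⊓ homogeneousSubmodule σ K k) (q := homogeneousSubmodule σ K k) inf_le_right).finrank_eq
  rw [← h4] at h5
  rw [h3] at h2
  unfold colen hilbertFn
  omega

end PartOne

section PartTwo

variable {K : Type*} [Field K]

theorem colen_pi {σ τ : Type*} [Finite σ] (J : Ideal (MvPolynomial σ K))
    (J' : Ideal (MvPolynomial τ K)) (ℓ k : ℕ)
    (sec : (Fin ℓ → MvPolynomial σ K) →ₗ[K] MvPolynomial τ K)
    (ha : ∀ k r, (∀ i : Fin ℓ, r i ∈ ordGe K σ (k - i)) → sec r ∈ ordGe K τ k)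
    (hb : ∀ k, ∀ h ∈ ordGe K τ k, ∃ h', (∀ i : Fin ℓ, h' i ∈ ordGe K σ (k - i)) ∧
      h - sec h' ∈ J')
    (hc : ∀ r, sec r ∈ J' ↔ ∀ i, r i ∈ J) :
    colen J' k = ∑ i : Fin ℓ, colen J (k - i) := by
  let T := (jm J' k).mkQ ∘ₗ sec
  have hT : Function.Surjective T := by
    intro x
    obtain ⟨f, rfl⟩ := (jm J' k).mkQ_surjective x
    obtain ⟨h', -, hh⟩ := hb 0 f (by rw [ordGe_zero]; trivial)
    refine ⟨h', ?_⟩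
    symm
    refine (Submodule.Quotient.eq _).2 ?_
    exact Submodule.mem_sup_left hh
  have hker : LinearMap.ker T = Submodule.pi Set.univ fun i : Fin ℓ => jm J (k - i) := by
    ext r
    have e : T r = (jm J' k).mkQ (sec r) := rfl
    rw [LinearMap.mem_ker, e, ← LinearMap.mem_ker, Submodule.ker_mkQ, Submodule.mem_pi]
    constructor
    · intro h i _
      obtain ⟨a, ha', b, hb', hab⟩ := Submodule.mem_sup.1 h
      obtain ⟨h', hh1, hh2⟩ := hb k b hb'
      have h3 : sec (r - h') ∈ J' := by
        have : sec (r - h') = a + (b - sec h') := by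
          rw [map_sub, ← hab]; ring
        rw [this]
        exact J'.add_mem ha' hh2
      have h4 := (hc _).1 h3 i
      have : r i = (r - h') i + h' i := by simp
      rw [this]
      exact Submodule.add_mem_sup h4 (hh1 i)
    · intro h
      have h' : ∀ i : Fin ℓ, ∃ a ∈ J, ∃ b ∈ ordGe K σ (k - i), a + b = r i :=
        fun i => Submodule.mem_sup.1 (h i trivial)
      choose a ha1 b hb1 hab using h'
      have : r = a + b := funext fun i => (hab i).symm
      rw [this, map_add]
      exact Submodule.add_mem_sup ((hc a).2 ha1) (ha k b hb1)
  unfold colen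
  rw [← (T.quotKerEquivOfSurjective hT).finrank_eq,
    (Submodule.quotEquivOfEq _ _ hker).finrank_eq,
    (Submodule.quotientPi fun i : Fin ℓ => jm J (k - i)).finrank_eq,
    Module.finrank_pi_fintype]

/-- The section `(r_i) ↦ ∑ r_i y^i`. -/
noncomputable def secMap (K : Type*) [Field K] (n ℓ : ℕ) :
    (Fin ℓ → MvPolynomial (Fin n) K) →ₗ[K] MvPolynomial (Fin (n + 1)) K :=
  ∑ i : Fin ℓ, (LinearMap.mulRight K (X (Fin.last n) ^ (i : ℕ))) ∘ₗ
    (rename Fin.castSucc).toLinearMap ∘ₗ LinearMap.proj i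

theorem secMap_apply (n ℓ : ℕ) (r : Fin ℓ → MvPolynomial (Fin n) K) :
    secMap K n ℓ r = ∑ i : Fin ℓ, rename Fin.castSucc (r i) * X (Fin.last n) ^ (i : ℕ) := by
  simp [secMap]

theorem secMap_mem (n ℓ k : ℕ) (r : Fin ℓ → MvPolynomial (Fin n) K)
    (h : ∀ i : Fin ℓ, r i ∈ ordGe K (Fin n) (k - i)) :
    secMap K n ℓ r ∈ ordGe K (Fin (n + 1)) k := by
  rw [secMap_apply]
  refine Submodule.sum_mem _ fun i _ => ?_
  rw [X_pow_eq_monomial, mul_comm]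
  have h1 : rename Fin.castSucc (r i) ∈ ordGe K (Fin (n + 1)) (k - i) := by
    intro u hu
    by_contra hne
    obtain ⟨v, rfl, hv⟩ := coeff_rename_ne_zero _ _ _ hne
    rw [Finsupp.degree_mapDomain] at hu
    exact hv (h i v hu)
  refine ordGe_anti ?_ (monomial_mul_mem_ordGe _ _ h1)
  rw [Finsupp.degree_single]
  omega

theorem exists_split {n : ℕ} (v : Fin (n + 1) →₀ ℕ) :
    ∃ (u : Fin n →₀ ℕ) (a : ℕ), v = u.mapDomain Fin.castSucc + Finsupp.single (Fin.last n) a := by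
  refine ⟨Finsupp.equivFunOnFinite.symm fun i => v i.castSucc, v (Fin.last n), ?_⟩
  ext i
  refine Fin.lastCases ?_ (fun i => ?_) i
  · rw [Finsupp.add_apply, Finsupp.mapDomain_notin_range]
    · simp
    · simp
  · rw [Finsupp.add_apply, Finsupp.mapDomain_apply (Fin.castSucc_injective n)]
    simp

theorem expand_sum_zero {d ℓ : ℕ} (hℓ : 0 < ℓ) (M : Fin d →₀ ℕ) (j : Fin d)
    (hj : Nat.gcd ℓ (M j) = 1) (q : Fin ℓ → MvPolynomial (Fin d) K)
    (h : ∑ i : Fin ℓ, expand ℓ (q i) * monomial ((i : ℕ) • M) 1 = 0) (i : Fin ℓ) : q i = 0 := by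
  classical
  ext u
  have h1 := congrArg (coeff (ℓ • u + (i : ℕ) • M)) h
  rw [coeff_sum, Finset.sum_eq_single i] at h1
  · rw [coeff_mul_monomial, coeff_expand_smul _ hℓ.ne'] at h1
    simpa using h1
  · intro i' _ hne
    rw [coeff_mul_monomial']
    split_ifs with hle
    · rw [mul_one]
      apply coeff_expand_of_not_dvd (i := j)
      intro hd
      apply hne
      have hlej := hle j
      simp only [Finsupp.tsub_apply, Finsupp.add_apply, Finsupp.smul_apply, smul_eq_mul]
        at hd hlej
      have hmod : (i' : ℕ) * M j ≡ ℓ * u j + i * M j [MOD ℓ] := (Nat.modEq_iff_dvd' hlej).2 hd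
      have hmod2 : ℓ * u j + i * M j ≡ i * M j [MOD ℓ] := by
        simp [Nat.ModEq]
      have := Nat.ModEq.cancel_right_of_coprime hj (hmod.trans hmod2)
      exact Fin.ext (Nat.ModEq.eq_of_lt_of_lt this i'.2 i.2)
    · rfl
  · simp

end PartTwo

/-- For `ℓ ≤ s_1 + ⋯ + s_n` positive and coprime to some
component of `m = s_1 m_1 + ⋯ + s_n m_n`: if the Hilbert function of the local
ring of `V_S` (i.e. of the associated graded ring `K[x]/I_S*`) is
non-decreasing, then so is the Hilbert function of the local ring of the
extension. -/
theorem stmt_10 (K : Type*) [Field K] (d n : ℕ)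
    (m : Fin n → Fin d → ℕ) (s : Fin n → ℕ) (ℓ : ℕ) (hℓ : 0 < ℓ)
    (hδ : ℓ ≤ ∑ i, s i)
    (hgcd : ∃ j : Fin d, Nat.gcd ℓ (∑ i, s i * m i j) = 1)
    (φ : MvPolynomial (Fin n) K →ₐ[K] MvPolynomial (Fin d) K)
    (hφ : φ = aeval fun i : Fin n => ∏ j : Fin d, X j ^ m i j)
    (ψ : MvPolynomial (Fin (n + 1)) K →ₐ[K] MvPolynomial (Fin d) K)
    (hψ : ψ = aeval fun i : Fin (n + 1) =>
      Fin.lastCases (∏ j : Fin d, X j ^ (∑ i', s i' * m i' j))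
        (fun i' : Fin n => ∏ j : Fin d, X j ^ (ℓ * m i' j)) i)
    (hmono : Monotone (hilbertFn (tangentConeIdeal (RingHom.ker φ)))) :
    Monotone (hilbertFn (tangentConeIdeal (RingHom.ker ψ))) := by
  obtain ⟨j, hj⟩ := hgcd
  let M : Fin d →₀ ℕ := Finsupp.equivFunOnFinite.symm fun j => ∑ i', s i' * m i' j
  let S : Fin n →₀ ℕ := Finsupp.equivFunOnFinite.symm s
  have hprod : ∀ a : Fin d → ℕ, (∏ j : Fin d, X j ^ a j : MvPolynomial (Fin d) K) =
      monomial (Finsupp.equivFunOnFinite.symm a) 1 := by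
    intro a
    rw [monomial_eq, Finsupp.prod_fintype _ _ (by simp)]
    simp
  have hy : ψ (X (Fin.last n)) = monomial M 1 := by
    rw [hψ, aeval_X, Fin.lastCases_last, hprod]
  have hren : ∀ p, ψ (rename Fin.castSucc p) = expand ℓ (φ p) := by
    intro p
    have : ψ.comp (rename Fin.castSucc) = (expand ℓ).comp φ := by
      refine algHom_ext fun i => ?_
      simp only [AlgHom.comp_apply, rename_X]
      rw [hψ, hφ, aeval_X, aeval_X, Fin.lastCases_castSucc, map_prod]
      refine Finset.prod_congr rfl fun j _ => ?_
      rw [map_pow, expand_X, pow_mul]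
    exact DFunLike.congr_fun this p
  have hS : φ (monomial S 1) = monomial M 1 := by
    rw [hφ, aeval_monomial, map_one, one_mul, Finsupp.prod_fintype _ _ (by simp), ← hprod]
    simp only [← Finset.prod_pow, S, Finsupp.equivFunOnFinite_symm_apply_apply]
    rw [Finset.prod_comm]
    refine Finset.prod_congr rfl fun j _ => ?_
    rw [← Finset.prod_pow_eq_pow_sum]
    refine Finset.prod_congr rfl fun i _ => ?_
    rw [← pow_mul, mul_comm]
  have hSy : ψ (rename Fin.castSucc (monomial S 1)) = ψ (X (Fin.last n)) ^ ℓ := by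
    rw [hren, hS, hy, expand_monomial, monomial_pow, one_pow]
    try rfl
  have hSd : S.degree = ∑ i, s i := by
    rw [Finsupp.degree_eq_sum]; simp [S]
  have hc : ∀ r, secMap K n ℓ r ∈ RingHom.ker ψ ↔ ∀ i, r i ∈ RingHom.ker φ := by
    intro r
    have e : ψ (secMap K n ℓ r) = ∑ i : Fin ℓ, expand ℓ (φ (r i)) * monomial ((i : ℕ) • M) 1 := by
      rw [secMap_apply, map_sum]
      refine Finset.sum_congr rfl fun i _ => ?_
      rw [map_mul, map_pow, hren, hy, monomial_pow, one_pow]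
    simp only [RingHom.mem_ker]
    rw [e]
    constructor
    · intro h i
      exact expand_sum_zero hℓ M j (by simpa [M] using hj) (fun i => φ (r i)) h i
    · intro h
      simp [h]
  have hb1 : ∀ k (v : Fin (n + 1) →₀ ℕ) (c : K), k ≤ v.degree →
      ∃ h' : Fin ℓ → MvPolynomial (Fin n) K, (∀ i : Fin ℓ, h' i ∈ ordGe K (Fin n) (k - i)) ∧
      monomial v c - secMap K n ℓ h' ∈ RingHom.ker ψ := by
    intro k v c hk
    obtain ⟨u, a, rfl⟩ := exists_split v
    rw [map_add, Finsupp.degree_mapDomain, Finsupp.degree_single] at hk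
    let i₀ : Fin ℓ := ⟨a % ℓ, Nat.mod_lt _ hℓ⟩
    have ham := Nat.div_add_mod a ℓ
    refine ⟨Pi.single i₀ (monomial u c * monomial S 1 ^ (a / ℓ)), ?_, ?_⟩
    · intro i
      by_cases hi : i = i₀
      · subst hi
        rw [Pi.single_eq_same, monomial_pow, monomial_mul]
        intro w hw
        rw [coeff_monomial, if_neg]
        rintro rfl
        rw [map_add, map_nsmul, hSd, smul_eq_mul] at hw
        have h1 : ℓ * (a / ℓ) ≤ (a / ℓ) * ∑ i, s i := by
          rw [mul_comm]; exact Nat.mul_le_mul_left _ hδ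
        have h2 : (i₀ : ℕ) = a % ℓ := rfl
        omega
      · rw [Pi.single_eq_of_ne hi]; exact Submodule.zero_mem _
    · have e1 : monomial (u.mapDomain Fin.castSucc + Finsupp.single (Fin.last n) a) c =
          rename Fin.castSucc (monomial u c) * X (Fin.last n) ^ a := by
        rw [rename_monomial, X_pow_eq_monomial, monomial_mul, mul_one]
      rw [RingHom.mem_ker, map_sub, sub_eq_zero, secMap_apply, Finset.sum_eq_single i₀, e1,
        Pi.single_eq_same, map_mul, map_mul, map_mul, map_mul, map_pow, map_pow, map_pow, map_pow,
        hSy, ← pow_mul, mul_assoc, ← pow_add]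
      · have h2 : (i₀ : ℕ) = a % ℓ := rfl
        rw [h2, ham]
      · intro i _ hi
        rw [Pi.single_eq_of_ne hi, map_zero, zero_mul]
      · simp
  have hb : ∀ k, ∀ h ∈ ordGe K (Fin (n + 1)) k, ∃ h' : Fin ℓ → MvPolynomial (Fin n) K,
      (∀ i : Fin ℓ, h' i ∈ ordGe K (Fin n) (k - i)) ∧
      h - secMap K n ℓ h' ∈ RingHom.ker ψ := by
    intro k h hh
    have hv : ∀ v : h.support, k ≤ (v : Fin (n + 1) →₀ ℕ).degree := by
      intro v
      by_contra hlt
      exact (mem_support_iff.1 v.2) (hh v (by omega))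
    choose g hg1 hg2 using fun v : h.support => hb1 k v (coeff v h) (hv v)
    refine ⟨∑ v, g v, ?_, ?_⟩
    · intro i
      rw [Finset.sum_apply]
      exact Submodule.sum_mem _ fun v _ => hg1 v i
    · have e : h = ∑ v : h.support, monomial (v : Fin (n + 1) →₀ ℕ) (coeff v h) := by
        conv_lhs => rw [h.as_sum]
        rw [← Finset.sum_coe_sort]
      have e2 : h - secMap K n ℓ (∑ v, g v) = ∑ v : h.support,
          (monomial (v : Fin (n + 1) →₀ ℕ) (coeff v h) - secMap K n ℓ (g v)) := by
        rw [Finset.sum_sub_distrib, ← e, map_sum]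
      rw [e2]
      exact Submodule.sum_mem _ fun v _ => hg2 v
  have hL : ∀ k, colen (RingHom.ker ψ) k = ∑ i : Fin ℓ, colen (RingHom.ker φ) (k - i) := fun k =>
    colen_pi (RingHom.ker φ) (RingHom.ker ψ) ℓ k (secMap K n ℓ)
      (fun k r h => secMap_mem n ℓ k r h) hb hc
  have hH : ∀ k, hilbertFn (tangentConeIdeal (RingHom.ker ψ)) k =
      ∑ i : Fin ℓ, if (i : ℕ) ≤ k then hilbertFn (tangentConeIdeal (RingHom.ker φ)) (k - i)
        else 0 := by
    intro k
    have h1 := colen_succ (RingHom.ker ψ) k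
    have h2 : colen (RingHom.ker ψ) (k + 1) = colen (RingHom.ker ψ) k +
        ∑ i : Fin ℓ, if (i : ℕ) ≤ k then hilbertFn (tangentConeIdeal (RingHom.ker φ)) (k - i)
          else 0 := by
      rw [hL, hL, ← Finset.sum_add_distrib]
      refine Finset.sum_congr rfl fun i _ => ?_
      split_ifs with h
      · rw [← colen_succ, Nat.sub_add_comm h]
      · rw [add_zero, Nat.sub_eq_zero_of_le (by omega), Nat.sub_eq_zero_of_le (by omega)]
    omega
  intro a b hab
  rw [hH, hH]
  refine Finset.sum_le_sum fun i _ => ?_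
  split_ifs with h1 h2
  · exact hmono (by omega)
  · omega
  · exact Nat.zero_le _
  · exact le_rfl
end

section
/- Let m_1,…,m_n ∈ ℕ^d, let s_1,…,s_n ∈ ℕ, set m = s_1m_1 + ⋯ + s_nm_n, and let ℓ be a positive integer with ℓ ≤ s_1 + ⋯ + s_n such that gcd(ℓ, m_j) = 1 for some component m_j of m. Then for every k ∈ ℕ the Hilbert functions of the tangent cones satisfy H_{(I_{S_{ℓ,m}})*}(k) = Σ_{i=0}^{min(k,ℓ−1)} H_{I_S*}(k−i). -/
open MvPolynomial

section Helpers

theorem hc_mul {K : Type*} [CommSemiring K] {σ : Type*} (p F : MvPolynomial σ K) (i l : ℕ)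
    (hp : p.IsHomogeneous i) :
    homogeneousComponent l (p * F) = if i ≤ l then p * homogeneousComponent (l - i) F else 0 := by
  induction F using MvPolynomial.induction_on' with
  | monomial d c =>
    have h1 : (monomial d c : MvPolynomial σ K) ∈ homogeneousSubmodule σ K d.degree :=
      isHomogeneous_monomial c rfl
    have h2 : p * (monomial d c : MvPolynomial σ K) ∈ homogeneousSubmodule σ K (i + d.degree) :=
      hp.mul h1
    rw [homogeneousComponent_of_mem h1, homogeneousComponent_of_mem h2]
    split_ifs <;> first | rfl | omega | simp
  | add a b ha hb =>
    rw [mul_add, map_add, ha, hb, map_add]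
    split_ifs <;> simp [mul_add]

theorem exists_lift {K : Type*} [Field K] {σ : Type*} (I : Ideal (MvPolynomial σ K))
    (g : MvPolynomial σ K) (hg : g ∈ tangentConeIdeal I) :
    ∀ k, ∃ F ∈ I, (∀ i < k, homogeneousComponent i F = 0) ∧
      homogeneousComponent k F = homogeneousComponent k g := by
  classical
  unfold tangentConeIdeal at hg
  induction hg using Submodule.span_induction with
  | mem x hx =>
    obtain ⟨f, hf, hf0, rfl⟩ := hx
    intro k
    unfold lowestForm
    set o := sInf {i : ℕ | homogeneousComponent i f ≠ 0} with ho
    by_cases hk : k = o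
    · refine ⟨f, hf, ?_, ?_⟩
      · intro i hi
        by_contra h
        have : o ≤ i := Nat.sInf_le h
        omega
      · rw [homogeneousComponent_of_mem (homogeneousComponent_mem o f), if_pos hk, hk]
    · refine ⟨0, I.zero_mem, by simp, ?_⟩
      rw [homogeneousComponent_of_mem (homogeneousComponent_mem o f), if_neg hk, map_zero]
  | zero => exact fun k => ⟨0, I.zero_mem, by simp, rfl⟩
  | add x y _ _ hx hy =>
    intro k
    obtain ⟨F, hF, hF1, hF2⟩ := hx k
    obtain ⟨G, hG, hG1, hG2⟩ := hy k
    refine ⟨F + G, I.add_mem hF hG, ?_, ?_⟩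
    · intro i hi
      rw [map_add, hF1 i hi, hG1 i hi, add_zero]
    · rw [map_add, map_add, hF2, hG2]
  | smul a x _ hx =>
    rw [smul_eq_mul]
    induction a using MvPolynomial.induction_on' with
    | monomial d c =>
      intro k
      have hm : (monomial d c : MvPolynomial σ K).IsHomogeneous d.degree :=
        isHomogeneous_monomial c rfl
      by_cases hk : d.degree ≤ k
      · obtain ⟨F, hF, hF1, hF2⟩ := hx (k - d.degree)
        refine ⟨monomial d c * F, I.mul_mem_left _ hF, ?_, ?_⟩
        · intro i hi
          rw [hc_mul _ _ _ _ hm]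
          split_ifs
          · rw [hF1 _ (by omega), mul_zero]
          · rfl
        · rw [hc_mul _ _ _ _ hm, hc_mul _ _ _ _ hm, hF2]
      · refine ⟨0, I.zero_mem, by simp, ?_⟩
        rw [hc_mul _ _ _ _ hm, if_neg hk, map_zero]
    | add a b ha hb =>
      intro k
      obtain ⟨F, hF, hF1, hF2⟩ := ha k
      obtain ⟨G, hG, hG1, hG2⟩ := hb k
      refine ⟨F + G, I.add_mem hF hG, ?_, ?_⟩
      · intro i hi
        rw [map_add, hF1 i hi, hG1 i hi, add_zero]
      · rw [add_mul, map_add, map_add, hF2, hG2]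

theorem mem_tangentCone_iff {K : Type*} [Field K] {σ : Type*} (I : Ideal (MvPolynomial σ K))
    (k : ℕ) (g : MvPolynomial σ K) (hg : g ∈ homogeneousSubmodule σ K k) :
    g ∈ tangentConeIdeal I ↔
      ∃ F ∈ I, (∀ i < k, homogeneousComponent i F = 0) ∧ homogeneousComponent k F = g := by
  constructor
  · intro h
    have := exists_lift I g h k
    rwa [homogeneousComponent_of_mem hg, if_pos rfl] at this
  · rintro ⟨F, hF, h1, rfl⟩
    by_cases h0 : homogeneousComponent k F = 0
    · rw [h0]; exact Ideal.zero_mem _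
    · refine Ideal.subset_span ⟨F, hF, ?_, ?_⟩
      · rintro rfl; simp at h0
      · unfold lowestForm
        have : sInf {i : ℕ | homogeneousComponent i F ≠ 0} = k := by
          apply le_antisymm
          · exact Nat.sInf_le h0
          · have hne : {i : ℕ | homogeneousComponent i F ≠ 0}.Nonempty := ⟨k, h0⟩
            have := Nat.sInf_mem hne
            by_contra hlt
            exact this (h1 _ (by omega))
        rw [this]

noncomputable def redExp {n : ℕ} (s : Fin n → ℕ) (ℓ : ℕ) (e : Fin (n + 1) →₀ ℕ) : Fin n →₀ ℕ :=
  Finsupp.equivFunOnFinite.symm fun i => e i.castSucc + e (Fin.last n) / ℓ * s i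

theorem redExp_degree {n : ℕ} (s : Fin n → ℕ) (ℓ : ℕ) (hδ : ℓ ≤ ∑ i, s i)
    (e : Fin (n + 1) →₀ ℕ) : e.degree ≤ (redExp s ℓ e).degree + e (Fin.last n) % ℓ := by
  rw [Finsupp.degree_eq_sum, Finsupp.degree_eq_sum, Fin.sum_univ_castSucc]
  simp only [redExp, Finsupp.coe_equivFunOnFinite_symm, Finset.sum_add_distrib, ← Finset.mul_sum]
  have h1 := Nat.div_add_mod (e (Fin.last n)) ℓ
  have h2 := Nat.mul_le_mul_left (e (Fin.last n) / ℓ) hδ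
  rw [mul_comm] at h1
  omega

noncomputable def rho (K : Type*) [Field K] {n : ℕ} (s : Fin n → ℕ) (ℓ r : ℕ) :
    MvPolynomial (Fin (n + 1)) K →ₗ[K] MvPolynomial (Fin n) K :=
  (basisMonomials (Fin (n + 1)) K).constr K fun e =>
    if e (Fin.last n) % ℓ = r then monomial (redExp s ℓ e) 1 else 0

theorem rho_monomial (K : Type*) [Field K] {n : ℕ} (s : Fin n → ℕ) (ℓ r : ℕ)
    (e : Fin (n + 1) →₀ ℕ) (c : K) :
    rho K s ℓ r (monomial e c) =
      if e (Fin.last n) % ℓ = r then monomial (redExp s ℓ e) c else 0 := by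
  have : (monomial e c : MvPolynomial (Fin (n + 1)) K) = c • basisMonomials (Fin (n + 1)) K e := by
    simp [smul_monomial]
  rw [this, map_smul, rho, Module.Basis.constr_basis]
  split_ifs <;> simp [smul_monomial]

theorem hc_rho (K : Type*) [Field K] {n : ℕ} (s : Fin n → ℕ) (ℓ r : ℕ) (hδ : ℓ ≤ ∑ i, s i)
    (N : ℕ) (F : MvPolynomial (Fin (n + 1)) K) (hF : ∀ j < N, homogeneousComponent j F = 0)
    (i : ℕ) (hi : i + r < N) : homogeneousComponent i (rho K s ℓ r F) = 0 := by
  rw [F.as_sum, map_sum, map_sum]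
  refine Finset.sum_eq_zero fun e he => ?_
  rw [rho_monomial]
  split_ifs with h
  · have h1 : (monomial (redExp s ℓ e) (coeff e F) : MvPolynomial (Fin n) K) ∈
      homogeneousSubmodule (Fin n) K (redExp s ℓ e).degree := isHomogeneous_monomial _ rfl
    rw [homogeneousComponent_of_mem h1, if_neg]
    intro h2
    have h3 := redExp_degree s ℓ hδ e
    have h4 := congrArg (coeff e) (hF e.degree (by omega))
    rw [coeff_homogeneousComponent, if_pos rfl] at h4
    exact (mem_support_iff.1 he) h4
  · simp

noncomputable def iot (K : Type*) [Field K] (n : ℕ) (r : ℕ) :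
    MvPolynomial (Fin n) K →ₗ[K] MvPolynomial (Fin (n + 1)) K :=
  (LinearMap.mulLeft K (X (Fin.last n) ^ r)).comp (rename Fin.castSucc).toLinearMap

theorem iot_apply (K : Type*) [Field K] (n : ℕ) (r : ℕ) (g : MvPolynomial (Fin n) K) :
    iot K n r g = X (Fin.last n) ^ r * rename Fin.castSucc g := rfl

theorem hc_iot (K : Type*) [Field K] (n : ℕ) (r l : ℕ) (g : MvPolynomial (Fin n) K) :
    homogeneousComponent l (iot K n r g) =
      if r ≤ l then iot K n r (homogeneousComponent (l - r) g) else 0 := by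
  rw [iot_apply, hc_mul _ _ r l (isHomogeneous_X_pow _ _), iot_apply, rename_homogeneousComponent]

theorem rho_iot (K : Type*) [Field K] {n : ℕ} (s : Fin n → ℕ) (ℓ r r' : ℕ) (hr : r < ℓ)
    (g : MvPolynomial (Fin n) K) :
    rho K s ℓ r' (iot K n r g) = if r = r' then g else 0 := by
  induction g using MvPolynomial.induction_on' with
  | monomial d c =>
    have h0 : Finsupp.mapDomain Fin.castSucc d (Fin.last n) = 0 := by
      apply Finsupp.mapDomain_of_notMem_range
      rintro ⟨x, hx⟩
      exact (Fin.castSucc_lt_last x).ne hx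
    rw [iot_apply, rename_monomial, X_pow_eq_monomial, monomial_mul, rho_monomial, one_mul]
    have h1 : (Finsupp.single (Fin.last n) r + Finsupp.mapDomain Fin.castSucc d :
        Fin (n + 1) →₀ ℕ) (Fin.last n) = r := by
      simp [h0]
    have h2 : redExp s ℓ (Finsupp.single (Fin.last n) r + Finsupp.mapDomain Fin.castSucc d)
        = d := by
      ext i
      simp only [redExp, Finsupp.coe_equivFunOnFinite_symm, h1, Nat.div_eq_of_lt hr, zero_mul,
        add_zero]
      rw [Finsupp.add_apply, Finsupp.mapDomain_apply (Fin.castSucc_injective n),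
        Finsupp.single_eq_of_ne (Fin.castSucc_lt_last i).ne, zero_add]
    rw [h1, h2, Nat.mod_eq_of_lt hr]
  | add a b ha hb =>
    rw [map_add, map_add, ha, hb]
    split_ifs <;> simp

theorem aeval_monomials {K : Type*} [Field K] {σ τ : Type*} [Fintype σ] (M : σ → τ →₀ ℕ)
    (e : σ →₀ ℕ) (c : K) :
    aeval (fun i => (monomial (M i) 1 : MvPolynomial τ K)) (monomial e c) =
      monomial (∑ i, e i • M i) c := by
  rw [aeval_monomial, Finsupp.prod_fintype _ _ (by simp)]
  simp only [monomial_pow, one_pow]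
  rw [← monomial_sum_one, algebraMap_eq, C_mul_monomial, mul_one]

theorem prod_X_eq {K : Type*} [Field K] {d : ℕ} (a : Fin d → ℕ) :
    (∏ j : Fin d, X j ^ a j : MvPolynomial (Fin d) K) =
      monomial (Finsupp.equivFunOnFinite.symm a) 1 := by
  rw [monomial_eq, Finsupp.prod_fintype _ _ (by simp)]
  simp

theorem psi_eq {K : Type*} [Field K] {d n : ℕ}
    (m : Fin n → Fin d → ℕ) (s : Fin n → ℕ) (ℓ : ℕ) (hℓ : 0 < ℓ)
    (f : MvPolynomial (Fin (n + 1)) K) :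
    (aeval fun i : Fin (n + 1) =>
      (Fin.lastCases (∏ j : Fin d, X j ^ (∑ i', s i' * m i' j))
        (fun i' : Fin n => ∏ j : Fin d, X j ^ (ℓ * m i' j)) i : MvPolynomial (Fin d) K)) f =
    ∑ r ∈ Finset.range ℓ, expand ℓ ((aeval fun i : Fin n =>
        (∏ j : Fin d, X j ^ m i j : MvPolynomial (Fin d) K)) (rho K s ℓ r f)) *
      monomial (r • Finsupp.equivFunOnFinite.symm fun j => ∑ i', s i' * m i' j) 1 := by
  have hfun : (fun i : Fin (n + 1) =>
      (Fin.lastCases (∏ j : Fin d, X j ^ (∑ i', s i' * m i' j))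
        (fun i' : Fin n => ∏ j : Fin d, X j ^ (ℓ * m i' j)) i : MvPolynomial (Fin d) K)) =
      fun i => monomial (Fin.lastCases (Finsupp.equivFunOnFinite.symm fun j => ∑ i', s i' * m i' j)
        (fun i' => Finsupp.equivFunOnFinite.symm fun j => ℓ * m i' j) i) 1 := by
    funext i
    refine Fin.lastCases ?_ (fun i' => ?_) i
    · simp only [Fin.lastCases_last, prod_X_eq]
    · simp only [Fin.lastCases_castSucc, prod_X_eq]
  rw [hfun]
  simp only [prod_X_eq]
  induction f using MvPolynomial.induction_on' with
  | monomial e c =>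
    rw [aeval_monomials, Finset.sum_eq_single (e (Fin.last n) % ℓ)]
    · rw [rho_monomial, if_pos rfl, aeval_monomials, expand_monomial, monomial_mul, mul_one]
      congr 2
      ext j
      rw [Fin.sum_univ_castSucc]
      simp only [Fin.lastCases_last, Fin.lastCases_castSucc, Finsupp.add_apply, Finsupp.smul_apply,
        Finsupp.finsetSum_apply, Finsupp.coe_equivFunOnFinite_symm, smul_eq_mul, redExp,
        add_mul, Finset.sum_add_distrib, mul_add, Finset.mul_sum]
      have h1 := Nat.div_add_mod (e (Fin.last n)) ℓ
      rw [add_assoc]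
      congr 1
      · exact Finset.sum_congr rfl fun i _ => by ring
      · rw [← Finset.sum_add_distrib]
        refine Finset.sum_congr rfl fun i _ => ?_
        conv_lhs => rw [← h1]
        ring
    · intro r _ hr
      rw [rho_monomial, if_neg hr.symm]
      simp
    · intro h
      exact absurd (Finset.mem_range.2 (Nat.mod_lt _ hℓ)) h
  | add a b ha hb =>
    simp only [map_add, ha, hb, add_mul, Finset.sum_add_distrib]

theorem sum_expand_eq_zero {K : Type*} [Field K] {d : ℕ} (ℓ : ℕ) (hℓ : 0 < ℓ) (M : Fin d →₀ ℕ)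
    (j : Fin d) (hj : Nat.gcd ℓ (M j) = 1) (p : ℕ → MvPolynomial (Fin d) K)
    (h : ∑ r ∈ Finset.range ℓ, expand ℓ (p r) * monomial (r • M) 1 = 0) (r : ℕ) (hr : r < ℓ) :
    p r = 0 := by
  ext e
  have h1 := congrArg (coeff (ℓ • e + r • M)) h
  rw [coeff_sum, Finset.sum_eq_single r, coeff_mul_monomial, mul_one,
    coeff_expand_smul _ hℓ.ne'] at h1
  · rw [h1, coeff_zero, coeff_zero]
  · intro r' hr' hne
    rw [coeff_mul_monomial']
    split_ifs with hle
    · rw [coeff_expand_of_not_dvd (i := j), zero_mul]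
      intro hd
      apply hne
      have hle' := hle j
      simp only [Finsupp.tsub_apply, Finsupp.add_apply, Finsupp.smul_apply, smul_eq_mul] at hd hle'
      have h2 : r' * M j ≡ ℓ * e j + r * M j [MOD ℓ] := (Nat.modEq_iff_dvd' hle').2 hd
      have h3 : ℓ * e j + r * M j ≡ r * M j [MOD ℓ] := by
        simp [Nat.ModEq]
      have h4 : r' ≡ r [MOD ℓ] := Nat.ModEq.cancel_right_of_coprime hj (h2.trans h3)
      exact Nat.ModEq.eq_of_lt_of_lt h4 (Finset.mem_range.1 hr') hr
    · rfl
  · intro hn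
    exact absurd (Finset.mem_range.2 hr) hn

theorem hilbertFn_eq {K : Type*} [Field K] {n : ℕ} (J : Ideal (MvPolynomial (Fin n) K)) (k : ℕ) :
    hilbertFn J k = Module.finrank K (homogeneousSubmodule (Fin n) K k ⧸
      (Submodule.restrictScalars K J).comap (homogeneousSubmodule (Fin n) K k).subtype) := by
  have : Module.Finite K (homogeneousSubmodule (Fin n) K k) :=
    Module.Finite.iff_fg.2 (homogeneousSubmodule_fg _ _ k)
  have h := Submodule.finrank_quotient_add_finrank
    ((Submodule.restrictScalars K J).comap (homogeneousSubmodule (Fin n) K k).subtype)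
  have h2 := Submodule.finrank_map_subtype_eq (homogeneousSubmodule (Fin n) K k)
    ((Submodule.restrictScalars K J).comap (homogeneousSubmodule (Fin n) K k).subtype)
  rw [Submodule.map_comap_subtype, inf_comm] at h2
  unfold hilbertFn
  omega

/-- The reduction of a form of degree `k` modulo the leading form of `y^ℓ - x^s`. -/
noncomputable def theta (K : Type*) [Field K] {n : ℕ} (s : Fin n → ℕ) (ℓ k : ℕ)
    (I : Ideal (MvPolynomial (Fin n) K)) :
    homogeneousSubmodule (Fin (n + 1)) K k →ₗ[K]
      ((i : Fin (min (k + 1) ℓ)) → homogeneousSubmodule (Fin n) K (k - i) ⧸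
        (Submodule.restrictScalars K I).comap (homogeneousSubmodule (Fin n) K (k - i)).subtype) :=
  LinearMap.pi fun i => (Submodule.mkQ _).comp
    (((homogeneousComponent (k - i)).comp (rho K s ℓ i)).codRestrict _
      (fun _ => homogeneousComponent_mem _ _) ∘ₗ
        (homogeneousSubmodule (Fin (n + 1)) K k).subtype)

theorem theta_apply (K : Type*) [Field K] {n : ℕ} (s : Fin n → ℕ) (ℓ k : ℕ)
    (I : Ideal (MvPolynomial (Fin n) K)) (f : homogeneousSubmodule (Fin (n + 1)) K k)
    (i : Fin (min (k + 1) ℓ)) :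
    theta K s ℓ k I f i = Submodule.Quotient.mk
      ⟨homogeneousComponent (k - i) (rho K s ℓ i f.1), homogeneousComponent_mem _ _⟩ := rfl

theorem theta_surjective (K : Type*) [Field K] {n : ℕ} (s : Fin n → ℕ) (ℓ k : ℕ)
    (I : Ideal (MvPolynomial (Fin n) K)) : Function.Surjective (theta K s ℓ k I) := by
  intro v
  choose g hg using fun i => Submodule.Quotient.mk_surjective _ (v i)
  have hmem : ∑ i : Fin (min (k + 1) ℓ), iot K n i (g i).1 ∈
      homogeneousSubmodule (Fin (n + 1)) K k := by
    refine Submodule.sum_mem _ fun i _ => ?_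
    have h1 := (isHomogeneous_X_pow (R := K) (Fin.last n) (i : ℕ)).mul
      ((g i).2.rename_isHomogeneous (f := Fin.castSucc))
    have h2 : (i : ℕ) + (k - i) = k := by have := i.2; omega
    rw [h2] at h1
    exact h1
  refine ⟨⟨_, hmem⟩, ?_⟩
  funext i
  rw [theta_apply, ← hg i]
  congr 1
  apply Subtype.ext
  simp only [map_sum]
  rw [Finset.sum_eq_single i]
  · rw [rho_iot _ _ _ _ _ (by have := i.2; omega), if_pos rfl,
      homogeneousComponent_of_mem (g i).2, if_pos rfl]
  · intro b _ hb
    rw [rho_iot _ _ _ _ _ (by have := b.2; omega), if_neg (fun h => hb (Fin.ext h)), map_zero]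
  · simp

theorem theta_ker (K : Type*) [Field K] {n : ℕ} (s : Fin n → ℕ) (ℓ k : ℕ) (hδ : ℓ ≤ ∑ i, s i)
    (I : Ideal (MvPolynomial (Fin n) K)) (J : Ideal (MvPolynomial (Fin (n + 1)) K))
    (hJ : ∀ f, f ∈ J ↔ ∀ r < ℓ, rho K s ℓ r f ∈ I) :
    LinearMap.ker (theta K s ℓ k (tangentConeIdeal I)) =
      (Submodule.restrictScalars K (tangentConeIdeal J)).comap
        (homogeneousSubmodule (Fin (n + 1)) K k).subtype := by
  ext ⟨f, hf⟩
  have hfk : homogeneousComponent k f = f := by rw [homogeneousComponent_of_mem hf, if_pos rfl]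
  have hflt : ∀ j < k, homogeneousComponent j f = 0 := fun j hj => by
    rw [homogeneousComponent_of_mem hf, if_neg (by omega)]
  have hL : (⟨f, hf⟩ : homogeneousSubmodule (Fin (n + 1)) K k) ∈
      LinearMap.ker (theta K s ℓ k (tangentConeIdeal I)) ↔ ∀ i : Fin (min (k + 1) ℓ),
      homogeneousComponent (k - i) (rho K s ℓ i f) ∈ tangentConeIdeal I := by
    rw [LinearMap.mem_ker, funext_iff]
    refine forall_congr' fun i => ?_
    rw [theta_apply, Pi.zero_apply, Submodule.Quotient.mk_eq_zero]
    rfl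
  rw [hL]
  change _ ↔ f ∈ tangentConeIdeal J
  rw [mem_tangentCone_iff J k f hf]
  constructor
  · intro h
    have h' : ∀ r : ℕ, ∃ G ∈ I, (r < ℓ → ∀ i, i + r < k → homogeneousComponent i G = 0) ∧
        (r < ℓ → r ≤ k → homogeneousComponent (k - r) G =
          homogeneousComponent (k - r) (rho K s ℓ r f)) := by
      intro r
      by_cases hr : r < min (k + 1) ℓ
      · obtain ⟨G, hG, h1, h2⟩ := (mem_tangentCone_iff I (k - r) _
          (homogeneousComponent_mem _ _)).1 (h ⟨r, hr⟩)
        exact ⟨G, hG, fun _ i hi => h1 i (by omega), fun _ _ => h2⟩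
      · exact ⟨0, I.zero_mem, by simp, fun _ _ => by omega⟩
    choose G hG h1 h2 using h'
    refine ⟨f + ∑ r ∈ Finset.range ℓ, iot K n r (G r - rho K s ℓ r f), ?_, ?_, ?_⟩
    · rw [hJ]
      intro r hr
      rw [map_add, map_sum, Finset.sum_eq_single r]
      · rw [rho_iot _ _ _ _ _ hr, if_pos rfl]
        simpa using hG r
      · intro b hb hbr
        rw [rho_iot _ _ _ _ _ (Finset.mem_range.1 hb), if_neg hbr]
      · intro hn
        exact absurd (Finset.mem_range.2 hr) hn
    · intro i hi
      rw [map_add, hflt i hi, zero_add, map_sum]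
      refine Finset.sum_eq_zero fun r hr => ?_
      rw [hc_iot]
      split_ifs with hri
      · rw [map_sub, h1 r (Finset.mem_range.1 hr) _ (by omega),
          hc_rho K s ℓ r hδ k f hflt _ (by omega), sub_zero, map_zero]
      · rfl
    · rw [map_add, hfk, map_sum, Finset.sum_eq_zero, add_zero]
      intro r hr
      rw [hc_iot]
      split_ifs with hri
      · rw [map_sub, h2 r (Finset.mem_range.1 hr) hri, sub_self, map_zero]
      · rfl
  · rintro ⟨F, hF, h1, h2⟩ i
    have hi := i.2
    rw [mem_tangentCone_iff I (k - i) _ (homogeneousComponent_mem _ _)]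
    refine ⟨rho K s ℓ i F, (hJ F).1 hF i (by omega), ?_, ?_⟩
    · intro j hj
      exact hc_rho K s ℓ i hδ k F h1 _ (by omega)
    · rw [← sub_eq_zero, ← map_sub, ← map_sub]
      refine hc_rho K s ℓ i hδ (k + 1) _ ?_ _ (by omega)
      intro j hj
      rw [map_sub]
      rcases Nat.lt_succ_iff_lt_or_eq.1 hj with hj | rfl
      · rw [h1 j hj, hflt j hj, sub_zero]
      · rw [h2, hfk, sub_self]

theorem finrank_quot_of_surj {K V ι : Type*} [Field K] [AddCommGroup V] [Module K V] [Fintype ι]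
    (W : ι → Type*) [∀ i, AddCommGroup (W i)] [∀ i, Module K (W i)] [∀ i, Module.Finite K (W i)]
    (N : Submodule K V) (f : V →ₗ[K] ((i : ι) → W i)) (hf : Function.Surjective f)
    (hN : LinearMap.ker f = N) :
    Module.finrank K (V ⧸ N) = ∑ i, Module.finrank K (W i) := by
  subst hN
  rw [(f.quotKerEquivOfSurjective hf).finrank_eq, Module.finrank_pi_fintype]

theorem hilbertFn_extension (K : Type*) [Field K] {n : ℕ} (s : Fin n → ℕ) (ℓ k : ℕ)
    (hδ : ℓ ≤ ∑ i, s i)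
    (I : Ideal (MvPolynomial (Fin n) K)) (J : Ideal (MvPolynomial (Fin (n + 1)) K))
    (hJ : ∀ f, f ∈ J ↔ ∀ r < ℓ, rho K s ℓ r f ∈ I) :
    hilbertFn (tangentConeIdeal J) k =
      ∑ i ∈ Finset.range (min (k + 1) ℓ), hilbertFn (tangentConeIdeal I) (k - i) := by
  have hfin : ∀ i, Module.Finite K (homogeneousSubmodule (Fin n) K i) := fun i =>
    Module.Finite.iff_fg.2 (homogeneousSubmodule_fg _ _ i)
  have h := finrank_quot_of_surj (K := K) (V := homogeneousSubmodule (Fin (n + 1)) K k)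
    (fun i : Fin (min (k + 1) ℓ) => homogeneousSubmodule (Fin n) K (k - i) ⧸
        (Submodule.restrictScalars K (tangentConeIdeal I)).comap
          (homogeneousSubmodule (Fin n) K (k - i)).subtype)
    ((Submodule.restrictScalars K (tangentConeIdeal J)).comap
        (homogeneousSubmodule (Fin (n + 1)) K k).subtype) (theta K s ℓ k (tangentConeIdeal I))
    (theta_surjective K s ℓ k _) (theta_ker K s ℓ k hδ I J hJ)
  rw [hilbertFn_eq, h]
  rw [← Fin.sum_univ_eq_sum_range (fun i => hilbertFn (tangentConeIdeal I) (k - i))]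
  exact Finset.sum_congr rfl fun i _ => (hilbertFn_eq _ _).symm

end Helpers

/-- For `ℓ ≤ s_1 + ⋯ + s_n` positive and coprime to some
component of `m = s_1 m_1 + ⋯ + s_n m_n`, the Hilbert functions of the tangent
cones satisfy `H_{(I_{S_{ℓ,m}})*}(k) = ∑_{i=0}^{min(k,ℓ−1)} H_{I_S*}(k−i)`
for every `k ∈ ℕ`. -/
theorem stmt_11 (K : Type*) [Field K] (d n : ℕ)
    (m : Fin n → Fin d → ℕ) (s : Fin n → ℕ) (ℓ : ℕ) (hℓ : 0 < ℓ)
    (hδ : ℓ ≤ ∑ i, s i)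
    (hgcd : ∃ j : Fin d, Nat.gcd ℓ (∑ i, s i * m i j) = 1)
    (φ : MvPolynomial (Fin n) K →ₐ[K] MvPolynomial (Fin d) K)
    (hφ : φ = aeval fun i : Fin n => ∏ j : Fin d, X j ^ m i j)
    (ψ : MvPolynomial (Fin (n + 1)) K →ₐ[K] MvPolynomial (Fin d) K)
    (hψ : ψ = aeval fun i : Fin (n + 1) =>
      Fin.lastCases (∏ j : Fin d, X j ^ (∑ i', s i' * m i' j))
        (fun i' : Fin n => ∏ j : Fin d, X j ^ (ℓ * m i' j)) i) :
    ∀ k : ℕ, hilbertFn (tangentConeIdeal (RingHom.ker ψ)) k =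
      ∑ i ∈ Finset.range (min (k + 1) ℓ),
        hilbertFn (tangentConeIdeal (RingHom.ker φ)) (k - i) := by

  intro k
  obtain ⟨j, hj⟩ := hgcd
  have hJ : ∀ f, f ∈ RingHom.ker ψ ↔ ∀ r < ℓ, rho K s ℓ r f ∈ RingHom.ker φ := by
    intro f
    simp only [RingHom.mem_ker]
    rw [hψ, psi_eq m s ℓ hℓ, ← hφ]
    constructor
    · intro h r hr
      exact sum_expand_eq_zero ℓ hℓ _ j hj (fun r => φ (rho K s ℓ r f)) h r hr
    · intro h
      refine Finset.sum_eq_zero fun r hr => ?_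
      rw [h r (Finset.mem_range.1 hr), map_zero, zero_mul]
  exact hilbertFn_extension K s ℓ k hδ _ _ hJ
end
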